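/- For all δ > 0 there is a constant c > 0 such that the following holds for all p ∈ [1/2 + δ, 1]. If f : {0,1}^n → {0,1} satisfies var(f) > 0 and E_x[s_f(x)^p] ≤ A, then there exists i ∈ [n] such that I_i[f] ≥ 2^{−c·(A/var(f))^{1/p}}. -/

import Mathlib

open Finset

noncomputable section

/-- Expectation over the uniform distribution on `{0,1}^n`. -/
def hcExp (n : ℕ) (g : (Fin n → Bool) → ℝ) : ℝ :=
  (∑ x : Fin n → Bool, g x) / 2 ^ n

/-- Flip the `i`-th coordinate of `x`. -/
def hcFlip {n : ℕ} (x : Fin n → Bool) (i : Fin n) : Fin n → Bool :=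
  Function.update x i (!(x i))

/-- Sensitivity of `f` at `x`. -/
def sens {n : ℕ} (f : (Fin n → Bool) → Bool) (x : Fin n → Bool) : ℕ :=
  (Finset.univ.filter fun i => f (hcFlip x i) ≠ f x).card

/-- `f` with values in `{0,1} ⊆ ℝ`. -/
def toReal {n : ℕ} (f : (Fin n → Bool) → Bool) : (Fin n → Bool) → ℝ :=
  fun x => if f x then 1 else 0

/-- Variance of a Boolean function. -/
def hcVar (n : ℕ) (f : (Fin n → Bool) → Bool) : ℝ :=
  hcExp n (toReal f) - (hcExp n (toReal f)) ^ 2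

/-- Influence of coordinate `i`. -/
def influence (n : ℕ) (f : (Fin n → Bool) → Bool) (i : Fin n) : ℝ :=
  hcExp n (fun x => if f (hcFlip x i) = f x then 0 else 1)

/-- Fourier character. -/
def chi {n : ℕ} (S : Finset (Fin n)) (x : Fin n → Bool) : ℝ :=
  ∏ i ∈ S, (if x i then (-1 : ℝ) else 1)

/-- Fourier coefficient of `g` at `S`. -/
def fcoef (n : ℕ) (g : (Fin n → Bool) → ℝ) (S : Finset (Fin n)) : ℝ :=
  hcExp n (fun x => g x * chi S x)

/-- Derivative of `g` along coordinate `i`. -/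
def derivOn {n : ℕ} (g : (Fin n → Bool) → ℝ) (i : Fin n) (x : Fin n → Bool) : ℝ :=
  g (Function.update x i false) - g (Function.update x i true)

/-- Euclidean norm of the gradient of `g` at `x`. -/
def gradNorm2 {n : ℕ} (g : (Fin n → Bool) → ℝ) (x : Fin n → Bool) : ℝ :=
  Real.sqrt (∑ i, (derivOn g i x) ^ 2)

/-- `ℓ_p` norm of the gradient of `g` at `x`. -/
def gradNormP {n : ℕ} (p : ℝ) (g : (Fin n → Bool) → ℝ) (x : Fin n → Bool) : ℝ :=
  (∑ i, |derivOn g i x| ^ p) ^ (1 / p)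

/-- Fourier weight at exactly level `d`. -/
def wEq (n : ℕ) (g : (Fin n → Bool) → ℝ) (d : ℕ) : ℝ :=
  ∑ S ∈ Finset.univ.filter (fun S : Finset (Fin n) => S.card = d), (fcoef n g S) ^ 2

/-- Approximate level-`d` Fourier weight: levels in `[d, 2d)`. -/
def wApprox (n : ℕ) (g : (Fin n → Bool) → ℝ) (d : ℕ) : ℝ :=
  ∑ S ∈ Finset.univ.filter (fun S : Finset (Fin n) => d ≤ S.card ∧ S.card < 2 * d),
    (fcoef n g S) ^ 2

/-- Fourier weight at levels `≥ d`. -/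
def wGe (n : ℕ) (g : (Fin n → Bool) → ℝ) (d : ℕ) : ℝ :=
  ∑ S ∈ Finset.univ.filter (fun S : Finset (Fin n) => d ≤ S.card), (fcoef n g S) ^ 2



lemma hcExp_add {n : ℕ} (g h : (Fin n → Bool) → ℝ) :
    hcExp n (fun x => g x + h x) = hcExp n g + hcExp n h := by
  simp only [hcExp, Finset.sum_add_distrib, add_div]

lemma hcExp_mul_left {n : ℕ} (c : ℝ) (g : (Fin n → Bool) → ℝ) :
    hcExp n (fun x => c * g x) = c * hcExp n g := by
  simp only [hcExp, ← Finset.mul_sum, mul_div_assoc]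

lemma hcExp_mul_right {n : ℕ} (c : ℝ) (g : (Fin n → Bool) → ℝ) :
    hcExp n (fun x => g x * c) = hcExp n g * c := by
  simp only [mul_comm _ c, hcExp_mul_left]

lemma hcExp_sum {n : ℕ} {ι : Type*} (s : Finset ι) (g : ι → (Fin n → Bool) → ℝ) :
    hcExp n (fun x => ∑ i ∈ s, g i x) = ∑ i ∈ s, hcExp n (g i) := by
  simp only [hcExp, Finset.sum_div]
  rw [Finset.sum_comm]

lemma hcExp_mono {n : ℕ} {g h : (Fin n → Bool) → ℝ} (H : ∀ x, g x ≤ h x) :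
    hcExp n g ≤ hcExp n h := by
  unfold hcExp
  gcongr with x
  exact H x

lemma hcExp_nonneg {n : ℕ} {g : (Fin n → Bool) → ℝ} (H : ∀ x, 0 ≤ g x) :
    0 ≤ hcExp n g := by
  unfold hcExp
  have := Finset.sum_nonneg (fun x (_ : x ∈ (Finset.univ : Finset (Fin n → Bool))) => H x)
  positivity

lemma hcExp_const {n : ℕ} (c : ℝ) : hcExp n (fun _ => c) = c := by
  simp [hcExp]

lemma hcFlip_flip {n : ℕ} (x : Fin n → Bool) (i : Fin n) : hcFlip (hcFlip x i) i = x := by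
  simp [hcFlip]

lemma hcExp_flip {n : ℕ} (i : Fin n) (g : (Fin n → Bool) → ℝ) :
    hcExp n (fun x => g (hcFlip x i)) = hcExp n g := by
  unfold hcExp
  congr 1
  exact Equiv.sum_comp (Function.Involutive.toPerm (fun x => hcFlip x i)
    (fun x => hcFlip_flip x i)) g

lemma chi_flip {n : ℕ} (S : Finset (Fin n)) (x : Fin n → Bool) (i : Fin n) :
    chi S (hcFlip x i) = (if i ∈ S then -1 else 1) * chi S x := by
  unfold chi
  split_ifs with h
  · rw [← Finset.mul_prod_erase S _ h, ← Finset.mul_prod_erase S _ h]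
    rw [← mul_assoc]
    congr 1
    · simp only [hcFlip, Function.update_self]
      cases x i <;> simp
    · apply Finset.prod_congr rfl
      intro j hj
      simp [hcFlip, Function.update_of_ne (Finset.ne_of_mem_erase hj)]
  · rw [one_mul]
    apply Finset.prod_congr rfl
    intro j hj
    have : j ≠ i := fun e => h (e ▸ hj)
    simp [hcFlip, Function.update_of_ne this]

lemma chi_sq {n : ℕ} (S : Finset (Fin n)) (x : Fin n → Bool) : chi S x * chi S x = 1 := by
  unfold chi
  rw [← Finset.prod_mul_distrib]
  apply Finset.prod_eq_one
  intro i _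
  split_ifs <;> simp

lemma hcExp_odd {n : ℕ} (i : Fin n) (g : (Fin n → Bool) → ℝ)
    (h : ∀ x, g (hcFlip x i) = - g x) : hcExp n g = 0 := by
  have h1 := hcExp_flip i g
  simp only [h] at h1
  have h2 := hcExp_mul_left (n := n) (-1) g
  simp only [neg_one_mul] at h2
  linarith

lemma chi_orth {n : ℕ} (S T : Finset (Fin n)) :
    hcExp n (fun x => chi S x * chi T x) = if S = T then 1 else 0 := by
  split_ifs with h
  · subst h
    simp only [chi_sq]
    exact hcExp_const 1
  · obtain ⟨i, hi⟩ : ∃ i, ¬ (i ∈ S ↔ i ∈ T) := by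
      by_contra hc
      push Not at hc
      exact h (Finset.ext hc)
    apply hcExp_odd i
    intro x
    rw [chi_flip, chi_flip]
    by_cases h1 : i ∈ S <;> by_cases h2 : i ∈ T <;> simp_all

lemma chi_complete {n : ℕ} (x y : Fin n → Bool) :
    ∑ S : Finset (Fin n), chi S x * chi S y = if x = y then 2 ^ n else 0 := by
  have h1 : ∑ S : Finset (Fin n), chi S x * chi S y
      = ∏ i : Fin n, (1 + (if x i then (-1 : ℝ) else 1) * (if y i then (-1 : ℝ) else 1)) := by
    rw [Finset.prod_one_add]
    simp only [Finset.powerset_univ, chi, Finset.prod_mul_distrib]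
  rw [h1]
  split_ifs with h
  · subst h
    have : ∀ i : Fin n,
      (1 + (if x i then (-1 : ℝ) else 1) * (if x i then (-1 : ℝ) else 1)) = 2 := by
      intro i; split_ifs <;> norm_num
    rw [Finset.prod_congr rfl (fun i _ => this i)]
    simp
  · obtain ⟨i, hi⟩ : ∃ i, x i ≠ y i := Function.ne_iff.mp h
    apply Finset.prod_eq_zero (Finset.mem_univ i)
    cases hx : x i <;> cases hy : y i <;> simp_all

lemma fourier_inv {n : ℕ} (g : (Fin n → Bool) → ℝ) (x : Fin n → Bool) :
    ∑ S : Finset (Fin n), fcoef n g S * chi S x = g x := by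
  have h : ∀ S : Finset (Fin n), fcoef n g S * chi S x
      = hcExp n (fun y => g y * (chi S y * chi S x)) := by
    intro S
    rw [fcoef, ← hcExp_mul_right]
    simp only [mul_assoc]
  simp only [h]
  rw [← hcExp_sum]
  simp only [← Finset.mul_sum, chi_complete]
  simp [hcExp]

lemma fcoef_expand {n : ℕ} (c : Finset (Fin n) → ℝ) (S : Finset (Fin n)) :
    fcoef n (fun x => ∑ T : Finset (Fin n), c T * chi T x) S = c S := by
  unfold fcoef
  simp only [Finset.sum_mul]
  rw [hcExp_sum]
  simp only [mul_assoc]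
  simp only [hcExp_mul_left, chi_orth]
  simp

lemma plancherel {n : ℕ} (g h : (Fin n → Bool) → ℝ) :
    hcExp n (fun x => g x * h x) = ∑ S : Finset (Fin n), fcoef n g S * fcoef n h S := by
  have : (fun x => g x * h x)
      = fun x => ∑ S : Finset (Fin n), fcoef n h S * (g x * chi S x) := by
    funext x
    conv_lhs => rw [← fourier_inv h x]
    rw [Finset.mul_sum]
    apply Finset.sum_congr rfl
    intro S _
    ring
  rw [this, hcExp_sum]
  apply Finset.sum_congr rfl
  intro S _
  rw [hcExp_mul_left, mul_comm]
  rfl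

/-- Noise operator on the coordinates in `I`. -/
def hT {n : ℕ} (I : Finset (Fin n)) (ρ : ℝ) (g : (Fin n → Bool) → ℝ) (x : Fin n → Bool) : ℝ :=
  ∑ S : Finset (Fin n), (ρ ^ (S ∩ I).card * fcoef n g S) * chi S x

/-- Coordinate Laplacian. -/
def hL {n : ℕ} (i : Fin n) (g : (Fin n → Bool) → ℝ) (x : Fin n → Bool) : ℝ :=
  (g x - g (hcFlip x i)) / 2

lemma fcoef_hT {n : ℕ} (I : Finset (Fin n)) (ρ : ℝ) (g : (Fin n → Bool) → ℝ)
    (S : Finset (Fin n)) : fcoef n (hT I ρ g) S = ρ ^ (S ∩ I).card * fcoef n g S :=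
  fcoef_expand _ S

lemma fcoef_hL {n : ℕ} (i : Fin n) (g : (Fin n → Bool) → ℝ)
    (S : Finset (Fin n)) : fcoef n (hL i g) S = if i ∈ S then fcoef n g S else 0 := by
  have h : hL i g = fun x => ∑ S : Finset (Fin n),
      (if i ∈ S then fcoef n g S else 0) * chi S x := by
    funext x
    unfold hL
    rw [← fourier_inv g x, ← fourier_inv g (hcFlip x i), ← Finset.sum_sub_distrib, Finset.sum_div]
    apply Finset.sum_congr rfl
    intro S _
    rw [chi_flip]
    split_ifs <;> ring
  rw [h, fcoef_expand]

lemma hT_empty {n : ℕ} (ρ : ℝ) (g : (Fin n → Bool) → ℝ) (x : Fin n → Bool) :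
    hT ∅ ρ g x = g x := by
  simp [hT, fourier_inv]

lemma hT_insert {n : ℕ} {I : Finset (Fin n)} {i : Fin n} (hi : i ∉ I) (ρ : ℝ)
    (g : (Fin n → Bool) → ℝ) (x : Fin n → Bool) :
    hT (insert i I) ρ g x
      = (1 + ρ) / 2 * hT I ρ g x + (1 - ρ) / 2 * hT I ρ g (hcFlip x i) := by
  unfold hT
  rw [Finset.mul_sum, Finset.mul_sum, ← Finset.sum_add_distrib]
  apply Finset.sum_congr rfl
  intro S _
  rw [chi_flip]
  by_cases h : i ∈ S
  · have : (S ∩ insert i I) = insert i (S ∩ I) := by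
      ext j; simp only [Finset.mem_inter, Finset.mem_insert]; grind
    rw [this, Finset.card_insert_of_notMem (by simp [hi])]
    simp only [h, if_true]
    ring
  · have : (S ∩ insert i I) = S ∩ I := by
      ext j; simp only [Finset.mem_inter, Finset.mem_insert]; grind
    rw [this]
    simp only [h, if_false]
    ring

lemma hT_hL {n : ℕ} (I : Finset (Fin n)) (i : Fin n) (ρ : ℝ)
    (g : (Fin n → Bool) → ℝ) (x : Fin n → Bool) :
    hT I ρ (hL i g) x = (hT I ρ g x - hT I ρ g (hcFlip x i)) / 2 := by
  unfold hT
  rw [← Finset.sum_sub_distrib, Finset.sum_div]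
  apply Finset.sum_congr rfl
  intro S _
  rw [chi_flip, fcoef_hL]
  split_ifs <;> ring

lemma hT_mono {n : ℕ} (I : Finset (Fin n)) {ρ : ℝ} (h0 : 0 ≤ ρ) (h1 : ρ ≤ 1)
    {g h : (Fin n → Bool) → ℝ} (H : ∀ x, g x ≤ h x) : ∀ x, hT I ρ g x ≤ hT I ρ h x := by
  induction I using Finset.induction_on with
  | empty => intro x; simpa only [hT_empty] using H x
  | insert i I hi ih =>
    intro x
    rw [hT_insert hi, hT_insert hi]
    have := ih x
    have := ih (hcFlip x i)
    have a : 0 ≤ (1 + ρ) / 2 := by linarith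
    have b : 0 ≤ (1 - ρ) / 2 := by linarith
    gcongr

lemma hT_const {n : ℕ} (I : Finset (Fin n)) (ρ c : ℝ) :
    ∀ x : Fin n → Bool, hT I ρ (fun _ => c) x = c := by
  induction I using Finset.induction_on with
  | empty => intro x; simp only [hT_empty]
  | insert i I hi ih =>
    intro x
    rw [hT_insert hi, ih, ih]; ring

lemma hT_abs_le {n : ℕ} (I : Finset (Fin n)) {ρ : ℝ} (h0 : 0 ≤ ρ) (h1 : ρ ≤ 1)
    {g : (Fin n → Bool) → ℝ} {c : ℝ} (H : ∀ x, |g x| ≤ c) (x : Fin n → Bool) :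
    |hT I ρ g x| ≤ c := by
  rw [abs_le]
  constructor
  · rw [← hT_const I ρ (-c) x]
    exact hT_mono I h0 h1 (fun x => (abs_le.mp (H x)).1) x
  · rw [← hT_const I ρ c x]
    exact hT_mono I h0 h1 (fun x => (abs_le.mp (H x)).2) x

lemma local_poincare {n : ℕ} (I : Finset (Fin n)) {ρ κ : ℝ} (h0 : 0 ≤ ρ) (h1 : ρ ≤ 1)
    (hκ0 : 0 ≤ κ) (hκ : κ * ρ ^ 2 = 1 - ρ ^ 2) (g : (Fin n → Bool) → ℝ) :
    ∀ x, (hT I ρ g x) ^ 2 + κ * ∑ i ∈ I, (hT I ρ (hL i g) x) ^ 2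
      ≤ hT I ρ (fun y => g y ^ 2) x := by
  induction I using Finset.induction_on with
  | empty => intro x; simp [hT_empty]
  | insert i I hi ih =>
    intro x
    rw [Finset.sum_insert hi, hT_insert hi ρ (fun y => g y ^ 2)]
    have a : 0 ≤ (1 + ρ) / 2 := by linarith
    have b : 0 ≤ (1 - ρ) / 2 := by linarith
    have e1 := mul_le_mul_of_nonneg_left (ih x) a
    have e2 := mul_le_mul_of_nonneg_left (ih (hcFlip x i)) b
    have e3 : ∑ j ∈ I, (hT (insert i I) ρ (hL j g) x) ^ 2
        ≤ (1 + ρ) / 2 * ∑ j ∈ I, (hT I ρ (hL j g) x) ^ 2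
          + (1 - ρ) / 2 * ∑ j ∈ I, (hT I ρ (hL j g) (hcFlip x i)) ^ 2 := by
      rw [Finset.mul_sum, Finset.mul_sum, ← Finset.sum_add_distrib]
      apply Finset.sum_le_sum
      intro j _
      rw [hT_insert hi]
      have := mul_nonneg (mul_nonneg a b)
        (sq_nonneg (hT I ρ (hL j g) x - hT I ρ (hL j g) (hcFlip x i)))
      nlinarith
    have e4 := mul_le_mul_of_nonneg_left e3 hκ0
    have e5 : (hT (insert i I) ρ g x) ^ 2 + κ * (hT (insert i I) ρ (hL i g) x) ^ 2
        = (1 + ρ) / 2 * (hT I ρ g x) ^ 2 + (1 - ρ) / 2 * (hT I ρ g (hcFlip x i)) ^ 2 := by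
      rw [hT_hL, hT_insert hi, hT_insert hi, hcFlip_flip]
      generalize hT I ρ g x = u
      generalize hT I ρ g (hcFlip x i) = w
      linear_combination ((u - w) / 2) ^ 2 * hκ
    linarith

lemma hcExp_cs {n : ℕ} (g h : (Fin n → Bool) → ℝ) :
    (hcExp n (fun x => g x * h x)) ^ 2
      ≤ hcExp n (fun x => g x ^ 2) * hcExp n (fun x => h x ^ 2) := by
  unfold hcExp
  rw [div_pow, div_mul_div_comm, ← sq]
  gcongr
  exact Finset.sum_mul_sq_le_sq_mul_sq _ _ _

/-- Partial Fourier sum. -/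
def hP {n : ℕ} (I : Finset (Fin n)) (c : Finset (Fin n) → ℝ) (x : Fin n → Bool) : ℝ :=
  ∑ S ∈ I.powerset, c S * chi S x

lemma hP_flip {n : ℕ} {I : Finset (Fin n)} {i : Fin n} (hi : i ∉ I) (c : Finset (Fin n) → ℝ)
    (x : Fin n → Bool) : hP I c (hcFlip x i) = hP I c x := by
  unfold hP
  apply Finset.sum_congr rfl
  intro S hS
  rw [chi_flip, if_neg (fun h => hi (Finset.mem_powerset.mp hS h)), one_mul]

lemma bonami {n : ℕ} (I : Finset (Fin n)) {ρ : ℝ} (h0 : 0 ≤ ρ) (h1 : ρ ^ 2 ≤ 1 / 3) :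
    ∀ c : Finset (Fin n) → ℝ, hcExp n (fun x => (hP I (fun S => ρ ^ S.card * c S) x) ^ 4)
      ≤ (∑ S ∈ I.powerset, c S ^ 2) ^ 2 := by
  induction I using Finset.induction_on with
  | empty =>
    intro c
    simp only [hP, Finset.powerset_empty, Finset.sum_singleton, Finset.card_empty, pow_zero,
      one_mul, chi, Finset.prod_empty, mul_one]
    rw [hcExp_const]
    apply le_of_eq; ring
  | insert i I hi ih =>
    intro c
    rw [Finset.sum_powerset_insert hi]
    set c' : Finset (Fin n) → ℝ := fun S => c (insert i S) with hc'
    have hA := ih c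
    have hB := ih c'
    set A : (Fin n → Bool) → ℝ := hP I (fun S => ρ ^ S.card * c S) with hAdef
    set B : (Fin n → Bool) → ℝ := hP I (fun S => ρ ^ S.card * c' S) with hBdef
    set a := ∑ S ∈ I.powerset, c S ^ 2 with ha
    have hb : ∑ S ∈ I.powerset, c (insert i S) ^ 2 = ∑ S ∈ I.powerset, c' S ^ 2 := rfl
    rw [hb]
    set b := ∑ S ∈ I.powerset, c' S ^ 2 with hb'
    have ha0 : 0 ≤ a := Finset.sum_nonneg (fun _ _ => sq_nonneg _)
    have hb0 : 0 ≤ b := Finset.sum_nonneg (fun _ _ => sq_nonneg _)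
    have hexp : ∀ x, hP (insert i I) (fun S => ρ ^ S.card * c S) x
        = A x + ρ * (chi {i} x * B x) := by
      intro x
      simp only [hAdef, hBdef, hP]
      rw [Finset.sum_powerset_insert hi, Finset.mul_sum, Finset.mul_sum]
      congr 1
      apply Finset.sum_congr rfl
      intro S hS
      have hiS : i ∉ S := fun h => hi (Finset.mem_powerset.mp hS h)
      have : chi (insert i S) x = chi {i} x * chi S x := by
        simp only [chi, Finset.prod_insert hiS, Finset.prod_singleton]
      rw [this, Finset.card_insert_of_notMem hiS]
      simp only [hc']
      ring
    have hexp4 : ∀ x, (hP (insert i I) (fun S => ρ ^ S.card * c S) x) ^ 4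
        = ((A x ^ 4 + ρ ^ 4 * B x ^ 4) + 6 * ρ ^ 2 * (A x ^ 2 * B x ^ 2))
          + chi {i} x * (4 * ρ * (A x ^ 3 * B x) + 4 * ρ ^ 3 * (A x * B x ^ 3)) := by
      intro x
      rw [hexp]
      have h2 : chi {i} x ^ 2 = 1 := by rw [sq]; exact chi_sq _ _
      have h3 : chi {i} x ^ 3 = chi {i} x := by rw [pow_succ, h2, one_mul]
      have h4 : chi {i} x ^ 4 = 1 := by
        rw [show chi {i} x ^ 4 = (chi {i} x ^ 2) ^ 2 by ring, h2, one_pow]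
      linear_combination (6 * ρ ^ 2 * A x ^ 2 * B x ^ 2) * h2 + (4 * ρ ^ 3 * A x * B x ^ 3) * h3
        + (ρ ^ 4 * B x ^ 4) * h4
    simp only [hexp4]
    rw [hcExp_add, hcExp_add, hcExp_add, hcExp_mul_left, hcExp_mul_left]
    have hodd : hcExp n (fun x => chi {i} x * (4 * ρ * (A x ^ 3 * B x) + 4 * ρ ^ 3 * (A x * B x ^ 3)))
        = 0 := by
      apply hcExp_odd i
      intro x
      rw [chi_flip, hAdef, hBdef, hP_flip hi, hP_flip hi]
      simp
    rw [hodd]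
    have hcs := hcExp_cs (fun x => A x ^ 2) (fun x => B x ^ 2)
    simp only [← pow_mul] at hcs
    norm_num at hcs
    have hA0 : 0 ≤ hcExp n (fun x => A x ^ 4) := hcExp_nonneg (fun x => by positivity)
    have hB0 : 0 ≤ hcExp n (fun x => B x ^ 4) := hcExp_nonneg (fun x => by positivity)
    have hAB : hcExp n (fun x => A x ^ 2 * B x ^ 2) ≤ a * b := by
      apply le_of_sq_le_sq _ (by positivity)
      calc _ ≤ _ := hcs
        _ ≤ a ^ 2 * b ^ 2 := mul_le_mul hA hB hB0 (by positivity)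
        _ = _ := by ring
    have hAB0 : 0 ≤ hcExp n (fun x => A x ^ 2 * B x ^ 2) := hcExp_nonneg (fun x => by positivity)
    have hr4 : ρ ^ 4 ≤ 1 := by
      have : ρ ^ 4 = (ρ ^ 2) ^ 2 := by ring
      rw [this]
      have := sq_nonneg ρ
      nlinarith
    have t1 : ρ ^ 4 * hcExp n (fun x => B x ^ 4) ≤ 1 * b ^ 2 :=
      mul_le_mul hr4 hB hB0 (by norm_num)
    have t2 : 6 * ρ ^ 2 * hcExp n (fun x => A x ^ 2 * B x ^ 2) ≤ 2 * (a * b) :=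
      mul_le_mul (by linarith) hAB hAB0 (by norm_num)
    nlinarith

lemma hyper {n : ℕ} {ρ : ℝ} (h0 : 0 ≤ ρ) (h1 : ρ ^ 2 ≤ 1 / 3) (g : (Fin n → Bool) → ℝ) :
    hcExp n (fun x => (hT Finset.univ ρ g x) ^ 4) ≤ (hcExp n (fun x => g x ^ 2)) ^ 2 := by
  have h := bonami (n := n) Finset.univ h0 h1 (fcoef n g)
  have e1 : ∀ x, hP Finset.univ (fun S => ρ ^ S.card * fcoef n g S) x = hT Finset.univ ρ g x := by
    intro x
    simp [hP, hT]
  have e2 : hcExp n (fun x => g x ^ 2) = ∑ S ∈ (Finset.univ : Finset (Fin n)).powerset,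
      fcoef n g S ^ 2 := by
    simp only [sq, Finset.powerset_univ]
    exact plancherel g g
  rw [e2]
  simpa only [e1] using h

lemma hT_selfadj {n : ℕ} (I : Finset (Fin n)) (ρ : ℝ) (g h : (Fin n → Bool) → ℝ) :
    hcExp n (fun x => hT I ρ g x * h x) = hcExp n (fun x => g x * hT I ρ h x) := by
  rw [plancherel, plancherel]
  apply Finset.sum_congr rfl
  intro S _
  rw [fcoef_hT, fcoef_hT]
  ring

lemma hT_lin {n : ℕ} (I : Finset (Fin n)) (ρ : ℝ) {ι : Type*} (s : Finset ι) (a : ι → ℝ)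
    (u : ι → (Fin n → Bool) → ℝ) (x : Fin n → Bool) :
    hT I ρ (fun y => ∑ i ∈ s, a i * u i y) x = ∑ i ∈ s, a i * hT I ρ (u i) x := by
  have hc : ∀ S, fcoef n (fun y => ∑ i ∈ s, a i * u i y) S = ∑ i ∈ s, a i * fcoef n (u i) S := by
    intro S
    simp only [fcoef]
    simp only [Finset.sum_mul]
    rw [hcExp_sum]
    simp only [mul_assoc, hcExp_mul_left]
  simp only [hT, hc, Finset.mul_sum, Finset.sum_mul]
  rw [Finset.sum_comm]
  apply Finset.sum_congr rfl
  intro i _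
  apply Finset.sum_congr rfl
  intro S _
  ring

lemma fourier_ext {n : ℕ} {g h : (Fin n → Bool) → ℝ} (H : ∀ S, fcoef n g S = fcoef n h S) :
    g = h := by
  funext x
  rw [← fourier_inv g x, ← fourier_inv h x]
  simp only [H]

lemma energy {n : ℕ} (ρ : ℝ) (g : (Fin n → Bool) → ℝ) :
    hcExp n (fun x => ∑ i, (hT Finset.univ ρ (hL i g) x) ^ 2)
      = ∑ S : Finset (Fin n), (S.card : ℝ) * (ρ ^ 2) ^ S.card * fcoef n g S ^ 2 := by
  rw [hcExp_sum]
  simp only [sq]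
  simp only [plancherel, fcoef_hT, fcoef_hL, Finset.inter_univ]
  rw [Finset.sum_comm]
  apply Finset.sum_congr rfl
  intro S _
  have : ∀ i : Fin n, (ρ ^ S.card * if i ∈ S then fcoef n g S else 0) *
      (ρ ^ S.card * if i ∈ S then fcoef n g S else 0)
      = if i ∈ S then (ρ * ρ) ^ S.card * (fcoef n g S * fcoef n g S) else 0 := by
    intro i
    split_ifs
    · rw [mul_pow]; ring
    · ring
  simp only [this]
  rw [Finset.sum_ite_mem, Finset.univ_inter, Finset.sum_const, nsmul_eq_mul]
  ring

lemma hL_abs {n : ℕ} (f : (Fin n → Bool) → Bool) (i : Fin n) (x : Fin n → Bool) :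
    |hL i (toReal f) x| = if f (hcFlip x i) ≠ f x then 1 / 2 else 0 := by
  unfold hL toReal
  cases f (hcFlip x i) <;> cases f x <;> simp [abs_div]

lemma interp {s R τ p b : ℝ} (hs : 0 ≤ s) (hR : 0 ≤ R) (hτ : 0 ≤ τ) (hp : 1 / 2 < p) (hp1 : p ≤ 1)
    (hb : 0 ≤ b) (h1 : b ^ 2 ≤ s * R) (h2 : b ≤ s * τ) :
    b ≤ R ^ (1 - p) * τ ^ (2 * p - 1) * s ^ p := by
  have e : b = (b ^ 2) ^ (1 - p) * b ^ (2 * p - 1) := by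
    rw [← Real.rpow_natCast b 2, ← Real.rpow_mul hb]
    rcases hb.eq_or_lt with h | h
    · rw [← h, Real.zero_rpow (by linarith : 2 * p - 1 ≠ 0), mul_zero]
    · rw [← Real.rpow_add h]
      push_cast
      rw [show 2 * (1 - p) + (2 * p - 1) = 1 by ring, Real.rpow_one]
  calc b = (b ^ 2) ^ (1 - p) * b ^ (2 * p - 1) := e
    _ ≤ (s * R) ^ (1 - p) * (s * τ) ^ (2 * p - 1) := by
        apply mul_le_mul
        · exact Real.rpow_le_rpow (by positivity) h1 (by linarith)
        · exact Real.rpow_le_rpow hb h2 (by linarith)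
        · positivity
        · positivity
    _ = _ := by
        rw [Real.mul_rpow hs hR, Real.mul_rpow hs hτ]
        have : s ^ p = s ^ (1 - p) * s ^ (2 * p - 1) := by
          rcases hs.eq_or_lt with h | h
          · rw [← h, Real.zero_rpow (by linarith : 2 * p - 1 ≠ 0), mul_zero,
              Real.zero_rpow (by linarith : p ≠ 0)]
          · rw [← Real.rpow_add h]
            congr 1; ring
        rw [this]; ring

lemma master {n : ℕ} (f : (Fin n → Bool) → Bool) {ρ p R τ : ℝ} (h0 : 0 ≤ ρ) (h1 : ρ ≤ 1)
    (hR : 0 ≤ R) (hτ : 0 ≤ τ) (hp : 1 / 2 < p) (hp1 : p ≤ 1)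
    (u : Fin n → (Fin n → Bool) → ℝ) (hu : ∀ y, ∑ i, u i y ^ 2 ≤ R) (hu2 : ∀ i y, |u i y| ≤ τ) :
    hcExp n (fun x => ∑ i, hT Finset.univ ρ (hL i (toReal f)) x * u i x)
      ≤ R ^ (1 - p) * τ ^ (2 * p - 1) * hcExp n (fun x => (sens f x : ℝ) ^ p) := by
  rw [hcExp_sum]
  simp only [hT_selfadj]
  rw [← hcExp_sum, ← hcExp_mul_left]
  apply hcExp_mono
  intro x
  rw [← hT_lin Finset.univ ρ Finset.univ (fun i => hL i (toReal f) x) u x]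
  refine (le_abs_self _).trans ?_
  apply hT_abs_le _ h0 h1
  intro y
  have hs : ∀ c : ℝ, ∑ i, (if f (hcFlip x i) ≠ f x then c else 0) = (sens f x : ℝ) * c := by
    intro c
    rw [← Finset.sum_filter, Finset.sum_const, nsmul_eq_mul]
    rfl
  apply interp (by positivity) hR hτ hp hp1 (abs_nonneg _)
  · rw [sq_abs]
    refine (Finset.sum_mul_sq_le_sq_mul_sq _ _ _).trans ?_
    apply mul_le_mul _ (hu y) (Finset.sum_nonneg (fun _ _ => sq_nonneg _)) (by positivity)
    have := hs 1
    rw [mul_one] at this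
    rw [← this]
    apply Finset.sum_le_sum
    intro i _
    rw [← sq_abs, hL_abs]
    split_ifs <;> norm_num
  · rw [← hs]
    refine (Finset.abs_sum_le_sum_abs _ _).trans ?_
    apply Finset.sum_le_sum
    intro i _
    rw [abs_mul, hL_abs]
    have := hu2 i y
    have := abs_nonneg (u i y)
    split_ifs <;> linarith

lemma toReal_sq {n : ℕ} (f : (Fin n → Bool) → Bool) (x : Fin n → Bool) :
    toReal f x ^ 2 = toReal f x := by
  unfold toReal; split_ifs <;> norm_num

lemma toReal_le {n : ℕ} (f : (Fin n → Bool) → Bool) (x : Fin n → Bool) :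
    toReal f x ≤ 1 := by
  unfold toReal; split_ifs <;> norm_num

lemma hL_le {n : ℕ} (f : (Fin n → Bool) → Bool) (i : Fin n) (x : Fin n → Bool) :
    |hL i (toReal f) x| ≤ 1 := by
  rw [hL_abs]; split_ifs <;> norm_num

lemma grad_bound {n : ℕ} (f : (Fin n → Bool) → Bool) {ρ κ : ℝ} (h0 : 0 ≤ ρ) (h1 : ρ ≤ 1)
    (hκ0 : 0 < κ) (hκ : κ * ρ ^ 2 = 1 - ρ ^ 2) (x : Fin n → Bool) :
    ∑ i, (hT Finset.univ ρ (hL i (toReal f)) x) ^ 2 ≤ 1 / κ := by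
  have h := local_poincare Finset.univ h0 h1 hκ0.le hκ (toReal f) x
  have h2 : hT Finset.univ ρ (fun y => toReal f y ^ 2) x ≤ 1 := by
    rw [← hT_const Finset.univ ρ 1 x]
    apply hT_mono _ h0 h1
    intro y
    rw [toReal_sq]; exact toReal_le f y
  rw [le_div_iff₀ hκ0]
  nlinarith [sq_nonneg (hT Finset.univ ρ (toReal f) x)]

lemma hcVar_eq {n : ℕ} (f : (Fin n → Bool) → Bool) : hcVar n f = wGe n (toReal f) 1 := by
  have h1 : hcExp n (toReal f) = ∑ S : Finset (Fin n), fcoef n (toReal f) S ^ 2 := by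
    have := plancherel (toReal f) (toReal f)
    simp only [← sq, toReal_sq] at this
    exact this
  have h2 : fcoef n (toReal f) ∅ = hcExp n (toReal f) := by
    simp [fcoef, chi]
  unfold hcVar wGe
  have h3 : ∑ S : Finset (Fin n), fcoef n (toReal f) S ^ 2
      = ∑ S ∈ Finset.univ.filter (fun S : Finset (Fin n) => 1 ≤ S.card), fcoef n (toReal f) S ^ 2
        + fcoef n (toReal f) ∅ ^ 2 := by
    rw [← Finset.sum_filter_add_sum_filter_not Finset.univ
      (fun S : Finset (Fin n) => 1 ≤ S.card)]
    congr 1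
    have : (Finset.univ.filter (fun S : Finset (Fin n) => ¬ 1 ≤ S.card)) = {∅} := by
      ext S
      simp
    rw [this, Finset.sum_singleton]
  rw [h2] at h3
  linarith

lemma high_approx {n : ℕ} (f : (Fin n → Bool) → Bool) {p : ℝ} (hp : 1 / 2 < p) (hp1 : p ≤ 1)
    (D : ℕ) (hD : 1 ≤ D) :
    wApprox n (toReal f) D ≤ 8 * hcExp n (fun x => (sens f x : ℝ) ^ p) * (D : ℝ) ^ (-p) := by
  have hD' : (1 : ℝ) ≤ D := by exact_mod_cast hD
  have hD0 : (0 : ℝ) < D := by linarith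
  set E := hcExp n (fun x => (sens f x : ℝ) ^ p) with hE
  have hE0 : 0 ≤ E := hcExp_nonneg (fun x => by positivity)
  have hinv : 1 / (2 * (D : ℝ)) ≤ 1 / 2 := by
    apply one_div_le_one_div_of_le <;> linarith
  have hinv0 : 0 < 1 / (2 * (D : ℝ)) := by positivity
  set ρ := Real.sqrt (1 - 1 / (2 * (D : ℝ))) with hρ
  have hρ2 : ρ ^ 2 = 1 - 1 / (2 * (D : ℝ)) := Real.sq_sqrt (by linarith)
  have h0 : 0 ≤ ρ := Real.sqrt_nonneg _
  have h1 : ρ ≤ 1 := Real.sqrt_le_one.mpr (by linarith)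
  have hκ : 1 / (2 * (D : ℝ) - 1) * ρ ^ 2 = 1 - ρ ^ 2 := by
    rw [hρ2]
    have : 2 * (D : ℝ) - 1 ≠ 0 := by linarith
    field_simp
    ring
  have hg : ∀ x, ∑ i, (hT Finset.univ ρ (hL i (toReal f)) x) ^ 2 ≤ 2 * (D : ℝ) := by
    intro x
    have := grad_bound f h0 h1 (by apply one_div_pos.mpr; linarith) hκ x
    rw [one_div_one_div] at this
    linarith
  have hm := master f h0 h1 (by positivity : 0 ≤ 2 * (D : ℝ)) zero_le_one hp hp1
    (fun i => hT Finset.univ ρ (hL i (toReal f))) hg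
    (fun i y => hT_abs_le _ h0 h1 (hL_le f i) y)
  simp only [← sq] at hm
  rw [energy, hρ2, Real.one_rpow, mul_one, ← hE] at hm
  have hlow : (D : ℝ) / 4 * wApprox n (toReal f) D
      ≤ ∑ S : Finset (Fin n), (S.card : ℝ) * (1 - 1 / (2 * (D : ℝ))) ^ S.card
        * fcoef n (toReal f) S ^ 2 := by
    unfold wApprox
    rw [Finset.mul_sum]
    refine le_trans (Finset.sum_le_sum ?_) (Finset.sum_le_univ_sum_of_nonneg ?_)
    · intro S hS
      rw [Finset.mem_filter] at hS
      obtain ⟨-, hS1, hS2⟩ := hS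
      apply mul_le_mul_of_nonneg_right _ (sq_nonneg _)
      rw [div_eq_mul_one_div]
      apply mul_le_mul (by exact_mod_cast hS1) _ (by norm_num) (by positivity)
      calc (1 : ℝ) / 4 = (1 / 2) ^ 2 := by norm_num
        _ ≤ ((1 - 1 / (2 * (D : ℝ))) ^ D) ^ 2 := by
          apply pow_le_pow_left₀ (by norm_num)
          have := one_add_mul_le_pow (by linarith : (-2 : ℝ) ≤ -(1 / (2 * (D : ℝ)))) D
          rw [← sub_eq_add_neg] at this
          refine le_trans (le_of_eq ?_) this
          field_simp
          ring
        _ = (1 - 1 / (2 * (D : ℝ))) ^ (D * 2) := by rw [pow_mul]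
        _ ≤ _ := pow_le_pow_of_le_one (by linarith) (by linarith) (by omega)
    · intro S
      have : 0 ≤ 1 - 1 / (2 * (D : ℝ)) := by linarith
      positivity
  have hpow : (2 * (D : ℝ)) ^ (1 - p) ≤ 2 * (D * (D : ℝ) ^ (-p)) := by
    rw [Real.mul_rpow (by norm_num) hD0.le, sub_eq_add_neg 1 p, Real.rpow_add hD0, Real.rpow_one]
    apply mul_le_mul_of_nonneg_right _ (by positivity)
    calc (2 : ℝ) ^ (1 + -p) ≤ 2 ^ (1 : ℝ) :=
          Real.rpow_le_rpow_of_exponent_le (by norm_num) (by linarith)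
      _ = 2 := Real.rpow_one 2
  have h5 := mul_le_mul_of_nonneg_right hpow hE0
  have h6 : (D : ℝ) / 4 * wApprox n (toReal f) D ≤ (D : ℝ) / 4 * (8 * E * (D : ℝ) ^ (-p)) := by
    linarith
  exact le_of_mul_le_mul_left h6 (by positivity)

lemma wGe_split {n : ℕ} (g : (Fin n → Bool) → ℝ) (D : ℕ) :
    wGe n g D = wApprox n g D + wGe n g (2 * D) := by
  unfold wGe wApprox
  rw [← Finset.sum_filter_add_sum_filter_not
    (Finset.univ.filter (fun S : Finset (Fin n) => D ≤ S.card))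
      (fun S : Finset (Fin n) => S.card < 2 * D), Finset.filter_filter, Finset.filter_filter]
  congr 2
  ext S
  simp only [Finset.mem_filter, Finset.mem_univ, true_and]
  omega

lemma high {n : ℕ} (f : (Fin n → Bool) → Bool) {p : ℝ} (hp : 1 / 2 < p) (hp1 : p ≤ 1) (k : ℕ) :
    ∀ D : ℕ, 1 ≤ D → n < D + k →
    wGe n (toReal f) D ≤ 32 * hcExp n (fun x => (sens f x : ℝ) ^ p) * (D : ℝ) ^ (-p) := by
  have hE0 : 0 ≤ hcExp n (fun x => (sens f x : ℝ) ^ p) := hcExp_nonneg (fun x => by positivity)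
  induction k with
  | zero =>
    intro D hD hn
    unfold wGe
    rw [Finset.filter_false_of_mem, Finset.sum_empty]
    · positivity
    · intro S _
      have := Finset.card_le_univ S
      rw [Fintype.card_fin] at this
      omega
  | succ k ih =>
    intro D hD hn
    have h1 := ih (2 * D) (by omega) (by omega)
    have h2 := high_approx f hp hp1 D hD
    rw [wGe_split]
    set E := hcExp n (fun x => (sens f x : ℝ) ^ p)
    push_cast at h1
    rw [Real.mul_rpow (by norm_num) (by positivity)] at h1
    have h3 : (2 : ℝ) ^ (-p) ≤ 3 / 4 := by
      have a1 : (2 : ℝ) ^ (-p) ≤ 2 ^ (-(1 / 2) : ℝ) :=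
        Real.rpow_le_rpow_of_exponent_le (by norm_num) (by linarith)
      have a2 : ((2 : ℝ) ^ (-(1 / 2) : ℝ)) ^ 2 = 1 / 2 := by
        rw [← Real.rpow_natCast, ← Real.rpow_mul (by norm_num)]
        norm_num
      have a3 : (0 : ℝ) < (2 : ℝ) ^ (-(1 / 2) : ℝ) := by positivity
      nlinarith
    have h4 : 0 ≤ E * (D : ℝ) ^ (-p) := by positivity
    have h5 := mul_le_mul_of_nonneg_right h3 h4
    linarith

lemma low {n : ℕ} (f : (Fin n → Bool) → Bool) {p M τ : ℝ} (hp : 1 / 2 < p) (hp1 : p ≤ 1)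
    (hτ : 0 < τ) (hM0 : 0 ≤ M) (hM : ∀ i, influence n f i ≤ M) :
    ∑ S : Finset (Fin n), (S.card : ℝ) * ((1 / 4) ^ 2) ^ S.card * fcoef n (toReal f) S ^ 2
      ≤ M / τ ^ 2 * hcVar n f
        + τ ^ (2 * p - 1) * hcExp n (fun x => (sens f x : ℝ) ^ p) := by
  set v : Fin n → (Fin n → Bool) → ℝ := fun i => hT Finset.univ (1 / 4) (hL i (toReal f)) with hv
  set w : Fin n → (Fin n → Bool) → ℝ := fun i => hT Finset.univ (1 / 2) (hL i (toReal f)) with hw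
  have hvw : ∀ i, v i = hT Finset.univ (1 / 2) (w i) := by
    intro i
    apply fourier_ext
    intro S
    simp only [hv, hw, fcoef_hT]
    rw [← mul_assoc, ← mul_pow]
    norm_num
  have hw2 : ∀ i, hcExp n (fun x => w i x ^ 2) ≤ M := by
    intro i
    have e1 : hcExp n (fun x => w i x ^ 2) ≤ hcExp n (fun x => hL i (toReal f) x ^ 2) := by
      simp only [sq]
      rw [plancherel, plancherel]
      apply Finset.sum_le_sum
      intro S _
      simp only [hw, fcoef_hT]
      have h1 : ((1 / 2 : ℝ) ^ (S ∩ Finset.univ).card) ≤ 1 :=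
        pow_le_one₀ (by norm_num) (by norm_num)
      have h0 : 0 ≤ ((1 / 2 : ℝ) ^ (S ∩ Finset.univ).card) := by positivity
      generalize ((1 / 2 : ℝ) ^ (S ∩ Finset.univ).card) = r at *
      have h2 : r * r ≤ 1 := by nlinarith
      have := mul_le_mul_of_nonneg_right h2 (mul_self_nonneg (fcoef n (hL i (toReal f)) S))
      linarith
    refine e1.trans (le_trans (hcExp_mono ?_) (hM i))
    intro x
    rw [← sq_abs, hL_abs]
    by_cases h : f (hcFlip x i) = f x <;> simp [h] ; norm_num
  have hv4 : ∀ i, hcExp n (fun x => v i x ^ 4) ≤ M * hcExp n (fun x => w i x ^ 2) := by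
    intro i
    rw [hvw]
    refine (hyper (by norm_num) (by norm_num) (w i)).trans ?_
    rw [sq]
    exact mul_le_mul_of_nonneg_right (hw2 i) (hcExp_nonneg (fun x => sq_nonneg _))
  have hsw : ∑ i, hcExp n (fun x => w i x ^ 2) ≤ hcVar n f := by
    rw [← hcExp_sum, energy, hcVar_eq, wGe, Finset.sum_filter]
    apply Finset.sum_le_sum
    intro S _
    split_ifs with h
    · have : (S.card : ℝ) * ((1 / 2) ^ 2) ^ S.card ≤ 1 := by
        have h4 : (S.card : ℝ) ≤ 4 ^ S.card := by
          exact_mod_cast (Nat.lt_pow_self (by norm_num : 1 < 4)).le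
        have : ((1 / 2 : ℝ) ^ 2) ^ S.card = 1 / 4 ^ S.card := by
          rw [← one_div_pow]; norm_num
        rw [this, mul_one_div]
        exact (div_le_one (by positivity)).mpr h4
      exact mul_le_of_le_one_left (sq_nonneg _) this
    · have : S.card = 0 := by omega
      simp [this]
  set u : Fin n → (Fin n → Bool) → ℝ := fun i x => if |v i x| ≤ τ then v i x else 0 with hu
  have hm := master f (ρ := 1 / 4) (p := p) (R := 1) (τ := τ) (by norm_num) (by norm_num)
    zero_le_one hτ.le hp hp1 u
    (by
      intro y
      have := grad_bound f (ρ := 1 / 4) (κ := 15) (by norm_num) (by norm_num) (by norm_num)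
        (by norm_num) y
      refine le_trans (Finset.sum_le_sum ?_) (this.trans (by norm_num))
      intro i _
      simp only [hu]
      split_ifs
      · exact le_rfl
      · rw [zero_pow (by norm_num)]; exact sq_nonneg _)
    (by
      intro i y
      simp only [hu]
      split_ifs with h
      · exact h
      · rw [abs_zero]; exact hτ.le)
  rw [Real.one_rpow, one_mul] at hm
  rw [← energy]
  have hpt : ∀ x, ∑ i, (hT Finset.univ (1 / 4) (hL i (toReal f)) x) ^ 2
      ≤ ∑ i, 1 / τ ^ 2 * v i x ^ 4 + ∑ i, hT Finset.univ (1 / 4) (hL i (toReal f)) x * u i x := by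
    intro x
    rw [← Finset.sum_add_distrib]
    apply Finset.sum_le_sum
    intro i _
    change v i x ^ 2 ≤ 1 / τ ^ 2 * v i x ^ 4 + v i x * u i x
    simp only [hu]
    split_ifs with h
    · have : 0 ≤ 1 / τ ^ 2 * v i x ^ 4 := by positivity
      nlinarith
    · push Not at h
      have h2 : τ ^ 2 ≤ v i x ^ 2 := by
        rw [← sq_abs (v i x)]
        exact pow_le_pow_left₀ hτ.le h.le 2
      rw [mul_zero, add_zero, one_div_mul_eq_div, le_div_iff₀ (by positivity)]
      nlinarith [sq_nonneg (v i x)]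
  refine (hcExp_mono hpt).trans ?_
  rw [hcExp_add]
  refine add_le_add ?_ hm
  rw [hcExp_sum]
  simp only [hcExp_mul_left]
  rw [← Finset.mul_sum]
  have : ∑ i, hcExp n (fun x => v i x ^ 4) ≤ M * hcVar n f := by
    refine (Finset.sum_le_sum (fun i _ => hv4 i)).trans ?_
    rw [← Finset.mul_sum]
    exact mul_le_mul_of_nonneg_left hsw hM0
  calc 1 / τ ^ 2 * ∑ i, hcExp n (fun x => v i x ^ 4) ≤ 1 / τ ^ 2 * (M * hcVar n f) :=
        mul_le_mul_of_nonneg_left this (by positivity)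
    _ = _ := by ring

lemma low_weight {n : ℕ} (g : (Fin n → Bool) → ℝ) (D : ℕ) (hD : 1 ≤ D) :
    wGe n g 1 ≤ wGe n g D + 16 ^ D *
      ∑ S : Finset (Fin n), (S.card : ℝ) * ((1 / 4) ^ 2) ^ S.card * fcoef n g S ^ 2 := by
  unfold wGe
  rw [Finset.sum_filter, Finset.sum_filter, Finset.mul_sum, ← Finset.sum_add_distrib]
  apply Finset.sum_le_sum
  intro S _
  have hnn : 0 ≤ (16 : ℝ) ^ D * ((S.card : ℝ) * ((1 / 4) ^ 2) ^ S.card * fcoef n g S ^ 2) := by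
    positivity
  by_cases h1 : 1 ≤ S.card
  · by_cases h2 : D ≤ S.card
    · simp only [h1, h2, if_true]; linarith
    · simp only [h1, h2, if_true, if_false, zero_add]
      rw [← mul_assoc]
      apply le_mul_of_one_le_left (sq_nonneg _)
      have e : ((1 / 4 : ℝ) ^ 2) ^ S.card = 1 / 16 ^ S.card := by
        rw [← one_div_pow]; norm_num
      have h3 : (16 : ℝ) ^ S.card ≤ 16 ^ D := pow_le_pow_right₀ (by norm_num) (by omega)
      have h4 : (1 : ℝ) ≤ S.card := by exact_mod_cast h1
      have h5 : (0 : ℝ) < 16 ^ S.card := by positivity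
      rw [e, mul_one_div, mul_div_assoc', le_div_iff₀ h5]
      nlinarith
  · have h2 : ¬ D ≤ S.card := by omega
    simp only [h1, h2, if_false, zero_add]
    exact hnn

theorem kkl_variant (δ : ℝ) (hδ : 0 < δ) :
    ∃ c : ℝ, 0 < c ∧
      ∀ (p : ℝ), 1 / 2 + δ ≤ p → p ≤ 1 →
        ∀ (n : ℕ) (f : (Fin n → Bool) → Bool) (A : ℝ),
          0 < hcVar n f →
          hcExp n (fun x => (sens f x : ℝ) ^ p) ≤ A →
          ∃ i : Fin n, influence n f i ≥ 2 ^ (-c * (A / hcVar n f) ^ (1 / p)) := by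
  refine ⟨150000 / δ, by positivity, ?_⟩
  intro p hpδ hp1 n f A hvar hA
  by_contra hcon
  push Not at hcon
  have hp : 1 / 2 < p := by linarith
  have hp0 : 0 < p := by linarith
  have hδ2 : δ ≤ 1 / 2 := by linarith
  set V := hcVar n f with hV
  set E := hcExp n (fun x => (sens f x : ℝ) ^ p) with hE
  set B := (A / V) ^ (1 / p) with hB
  set c := 150000 / δ with hc
  have hcδ : c * δ = 150000 := by rw [hc]; field_simp
  have hc0 : 0 < c := by positivity
  have hc3 : 300000 ≤ c := by nlinarith
  have hhigh : ∀ D : ℕ, 1 ≤ D → wGe n (toReal f) D ≤ 32 * A * (D : ℝ) ^ (-p) := by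
    intro D hD
    refine (high f hp hp1 (n + 1) D hD (by omega)).trans ?_
    have : 0 ≤ (D : ℝ) ^ (-p) := by positivity
    gcongr
  have hVA : V ≤ 32 * A := by
    have := hhigh 1 le_rfl
    rw [← hcVar_eq] at this
    simpa using this
  have hA0 : 0 < A := by linarith
  have hAV0 : 0 < A / V := by positivity
  have hB0 : 0 < B := Real.rpow_pos_of_pos hAV0 _
  have hBp : B ^ p = A / V := by
    rw [hB, ← Real.rpow_mul hAV0.le, one_div_mul_cancel hp0.ne', Real.rpow_one]
  have hA_eq : A = B ^ p * V := by rw [hBp]; field_simp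
  -- lower bound on B
  have hB1 : 1 / 1024 ≤ B := by
    by_contra hlt
    push Not at hlt
    have h1 : B ^ p ≤ B ^ (1 / 2 : ℝ) :=
      Real.rpow_le_rpow_of_exponent_ge hB0 (by linarith) hp.le
    have h2 : B ^ (1 / 2 : ℝ) < (1 / 1024) ^ (1 / 2 : ℝ) :=
      Real.rpow_lt_rpow hB0.le hlt (by norm_num)
    have h3 : (1 / 1024 : ℝ) ^ (1 / 2 : ℝ) = 1 / 32 := by
      rw [← Real.sqrt_eq_rpow, show (1 / 1024 : ℝ) = (1 / 32) ^ 2 by norm_num]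
      exact Real.sqrt_sq (by norm_num)
    have h4 : 1 / 32 ≤ A / V := by
      rw [le_div_iff₀ hvar]; linarith
    linarith
  -- choice of D
  set D := ⌈16384 * B⌉₊ with hDdef
  have hDge : 16384 * B ≤ D := Nat.le_ceil _
  have hDlt : (D : ℝ) ≤ 17408 * B := by
    have := Nat.ceil_lt_add_one (by positivity : 0 ≤ 16384 * B)
    linarith
  have hD1 : 1 ≤ D := by
    have : (0 : ℝ) < D := by linarith
    exact_mod_cast this
  have hD0 : (0 : ℝ) < D := by linarith
  have hHigh : wGe n (toReal f) D ≤ V / 4 := by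
    refine (hhigh D hD1).trans ?_
    have h1 : (D : ℝ) ^ (-p) ≤ (16384 * B) ^ (-p) :=
      Real.rpow_le_rpow_of_nonpos (by positivity) hDge (by linarith)
    rw [Real.mul_rpow (by norm_num) hB0.le] at h1
    have h2 : (16384 : ℝ) ^ (-p) ≤ 1 / 128 := by
      have a1 : (16384 : ℝ) ^ (-p) ≤ 16384 ^ (-(1 / 2) : ℝ) :=
        Real.rpow_le_rpow_of_exponent_le (by norm_num) (by linarith)
      have a2 : (16384 : ℝ) ^ (-(1 / 2) : ℝ) = 1 / 128 := by
        rw [Real.rpow_neg (by norm_num), ← Real.sqrt_eq_rpow,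
          show (16384 : ℝ) = 128 ^ 2 by norm_num, Real.sqrt_sq (by norm_num)]
        norm_num
      linarith
    have h3 : A * B ^ (-p) = V := by
      rw [hA_eq, Real.rpow_neg hB0.le]
      have : B ^ p ≠ 0 := (Real.rpow_pos_of_pos hB0 p).ne'
      field_simp
    calc 32 * A * (D : ℝ) ^ (-p) ≤ 32 * A * (16384 ^ (-p) * B ^ (-p)) := by gcongr
      _ = 32 * (16384 : ℝ) ^ (-p) * (A * B ^ (-p)) := by ring
      _ = 32 * (16384 : ℝ) ^ (-p) * V := by rw [h3]
      _ ≤ 32 * (1 / 128) * V := by gcongr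
      _ = V / 4 := by ring
  -- low part
  set M : ℝ := 2 ^ (-c * B) with hM
  set τ : ℝ := 2 ^ (-c * B / 4) with hτ
  have hτ0 : 0 < τ := by positivity
  have hM0 : 0 < M := by positivity
  have hlow := low f hp hp1 hτ0 hM0.le (fun i => (hcon i).le)
  rw [← hV, ← hE] at hlow
  have hMτ : M / τ ^ 2 ≤ 2 ^ (-75000 * B) := by
    have : M / τ ^ 2 = 2 ^ (-c * B / 2) := by
      rw [hM, hτ, ← Real.rpow_natCast, ← Real.rpow_mul (by norm_num), ← Real.rpow_sub (by norm_num)]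
      congr 1
      push_cast
      ring
    rw [this]
    apply Real.rpow_le_rpow_of_exponent_le (by norm_num)
    nlinarith
  have hτp : τ ^ (2 * p - 1) ≤ 2 ^ (-75000 * B) := by
    rw [hτ, ← Real.rpow_mul (by norm_num)]
    apply Real.rpow_le_rpow_of_exponent_le (by norm_num)
    have : c * B * (2 * δ) ≤ c * B * (2 * p - 1) :=
      mul_le_mul_of_nonneg_left (by linarith) (by positivity)
    have h2 : c * B * (2 * δ) = 300000 * B := by
      rw [show c * B * (2 * δ) = 2 * (c * δ) * B by ring, hcδ]; ring
    linarith
  have hBB : B ≤ 2 ^ B := by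
    have h := one_add_mul_self_le_rpow_one_add (by norm_num : (-1 : ℝ) ≤ 1) (p := max B 1)
      (le_max_right _ _)
    by_cases hb : 1 ≤ B
    · rw [max_eq_left hb] at h
      norm_num at h
      linarith
    · have : (1 : ℝ) ≤ 2 ^ B := Real.one_le_rpow (by norm_num) hB0.le
      linarith
  have hBp2 : B ^ p ≤ 2 ^ B := by
    by_cases hb : 1 ≤ B
    · calc B ^ p ≤ B ^ (1 : ℝ) := Real.rpow_le_rpow_of_exponent_le hb hp1
        _ = B := Real.rpow_one B
        _ ≤ _ := hBB
    · have h1 : (1 : ℝ) ≤ 2 ^ B := Real.one_le_rpow (by norm_num) hB0.le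
      have h2 : B ^ p ≤ 1 := Real.rpow_le_one hB0.le (by linarith) hp0.le
      linarith
  have h16 : (16 : ℝ) ^ D ≤ 2 ^ (69632 * B) := by
    rw [show (16 : ℝ) = 2 ^ (4 : ℝ) by norm_num, ← Real.rpow_natCast, ← Real.rpow_mul (by norm_num)]
    apply Real.rpow_le_rpow_of_exponent_le (by norm_num)
    linarith
  have hone : (1 : ℝ) ≤ 2 ^ B := Real.one_le_rpow (by norm_num) hB0.le
  have hq0 : (0 : ℝ) < 2 ^ (-75000 * B) := by positivity
  have hsum : M / τ ^ 2 * V + τ ^ (2 * p - 1) * E ≤ 2 * (2 ^ (-75000 * B) * 2 ^ B) * V := by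
    have e1 : M / τ ^ 2 * V ≤ 2 ^ (-75000 * B) * 2 ^ B * V := by
      apply mul_le_mul_of_nonneg_right _ hvar.le
      nlinarith
    have e2 : τ ^ (2 * p - 1) * E ≤ 2 ^ (-75000 * B) * 2 ^ B * V := by
      calc τ ^ (2 * p - 1) * E ≤ τ ^ (2 * p - 1) * A := by gcongr
        _ ≤ 2 ^ (-75000 * B) * A := by gcongr
        _ = 2 ^ (-75000 * B) * B ^ p * V := by rw [hA_eq]; ring
        _ ≤ _ := by gcongr
    linarith
  have hsmall : (2 : ℝ) ^ (69632 * B) * (2 ^ (-75000 * B) * 2 ^ B) ≤ 1 / 4 := by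
    rw [← Real.rpow_add (by norm_num), ← Real.rpow_add (by norm_num)]
    calc (2 : ℝ) ^ (69632 * B + (-75000 * B + B)) ≤ 2 ^ (-2 : ℝ) :=
          Real.rpow_le_rpow_of_exponent_le (by norm_num) (by linarith)
      _ = 1 / 4 := by
          rw [Real.rpow_neg (by norm_num)]; norm_num
  have hw := low_weight (toReal f) D hD1
  rw [← hcVar_eq, ← hV] at hw
  have hfin : (16 : ℝ) ^ D * ∑ S : Finset (Fin n), (S.card : ℝ) * ((1 / 4) ^ 2) ^ S.card
      * fcoef n (toReal f) S ^ 2 ≤ 1 / 2 * V := by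
    calc (16 : ℝ) ^ D * ∑ S : Finset (Fin n), (S.card : ℝ) * ((1 / 4) ^ 2) ^ S.card
          * fcoef n (toReal f) S ^ 2
        ≤ 16 ^ D * (2 * (2 ^ (-75000 * B) * 2 ^ B) * V) :=
          mul_le_mul_of_nonneg_left (hlow.trans hsum) (by positivity)
      _ ≤ 2 ^ (69632 * B) * (2 * (2 ^ (-75000 * B) * 2 ^ B) * V) :=
          mul_le_mul_of_nonneg_right h16 (by positivity)
      _ = 2 * (2 ^ (69632 * B) * (2 ^ (-75000 * B) * 2 ^ B)) * V := by ring
      _ ≤ 2 * (1 / 4) * V := by gcongr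
      _ = 1 / 2 * V := by ring
  linarith

end
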